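/- Let s > 11/2 and suppose (ξ_k)_{k≥1} satisfies Σ_{k≥1} ‖ξ_k‖_{H^σ} < ∞ for every σ ≥ 0. For X = (u,η) ∈ H^s(𝕋) × H^{s-1}(𝕋), set h^k(X) = (−(1−∂²_x)^{-1} 𝓛_{ξ_k} (1−∂²_x) u, −𝓛_{ξ_k} η), and for ε ∈ (0,1) let T̃_ε = (1 − ε²∂²_x)^{-1} act componentwise. Then there is a constant C > 0, independent of ε, such that for all X: Σ_{k=1}^∞ |(T̃_ε h^k(X), T̃_ε X)_{H^s×H^{s-1}}|² ≤ C (‖u‖²_{H^s} + ‖η‖²_{H^{s-1}}) ‖T̃_ε X‖²_{H^s×H^{s-1}}. -/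

import Mathlib

noncomputable section
open scoped BigOperators

/-- A (complex-valued) function on the torus `𝕋 = ℝ/2πℤ`, represented by its sequence of
Fourier coefficients `f̂ : ℤ → ℂ`. -/
abbrev FC := ℤ → ℂ

namespace FC

/-- The Sobolev weight `(1+k²)^s`. -/
def wt (s : ℝ) (k : ℤ) : ℝ := (1 + (k : ℝ) ^ 2) ^ s

/-- `c` represents a function belonging to the Sobolev space `H^s(𝕋)`. -/
def memHs (s : ℝ) (c : FC) : Prop := Summable fun k : ℤ => wt s k * ‖c k‖ ^ 2

/-- The `H^s(𝕋)` norm: `‖f‖²_{H^s} = Σ_{k∈ℤ} (1+k²)^s |f̂(k)|²`. -/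
def hsNorm (s : ℝ) (c : FC) : ℝ := Real.sqrt (∑' k : ℤ, wt s k * ‖c k‖ ^ 2)

/-- The `H^s(𝕋)` inner product `(f,g)_{H^s} = Σ_{k∈ℤ} (1+k²)^s f̂(k) conj(ĝ(k))`
(its real part; the sum is real for real-valued functions). -/
def hsInner (s : ℝ) (c d : FC) : ℝ :=
  (∑' k : ℤ, ((wt s k : ℂ) * (c k * (starRingEnd ℂ) (d k)))).re

/-- `c` represents a real-valued function (conjugate-symmetric coefficients). -/
def isReal (c : FC) : Prop := ∀ k : ℤ, c (-k) = (starRingEnd ℂ) (c k)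

/-- The derivative `∂ₓ`, i.e. the Fourier multiplier `ik`. -/
def D1 (c : FC) : FC := fun k => Complex.I * (k : ℂ) * c k

/-- The pointwise product of functions, i.e. convolution of Fourier coefficients. -/
def mul (c d : FC) : FC := fun k => ∑' j : ℤ, c j * d (k - j)

/-- The represented function, evaluated at `x ∈ ℝ`. -/
def eval (c : FC) (x : ℝ) : ℂ := ∑' k : ℤ, c k * Complex.exp (Complex.I * (k : ℂ) * (x : ℂ))

/-- The `L^∞` norm (supremum of the represented periodic function over ℝ). -/
def linfty (c : FC) : ℝ := ⨆ x : ℝ, ‖eval c x‖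

/-- The `W^{1,∞}` norm. -/
def w1infty (c : FC) : ℝ := linfty c + linfty (D1 c)

/-- A Fourier multiplier operator with real symbol `m`. -/
def mult (m : ℤ → ℝ) (c : FC) : FC := fun k => (m k : ℂ) * c k

/-- The operator `(1-∂ₓ²)⁻¹`, i.e. the Fourier multiplier `(1+k²)⁻¹`. -/
def helmInv : FC → FC := mult fun k => (1 + (k : ℝ) ^ 2)⁻¹

/-- The operator `1-∂ₓ²`, i.e. the Fourier multiplier `1+k²`. -/
def helm : FC → FC := mult fun k => 1 + (k : ℝ) ^ 2

/-- The operator `T̃_ε = (1-ε²∂ₓ²)⁻¹`, i.e. the Fourier multiplier `(1+ε²k²)⁻¹`. -/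
def T (ε : ℝ) : FC → FC := mult fun k => (1 + ε ^ 2 * (k : ℝ) ^ 2)⁻¹

/-- The periodic Hilbert transform, i.e. the Fourier multiplier `-i·sgn(k)`. -/
def hilbert (c : FC) : FC := fun k => -Complex.I * (Int.sign k : ℂ) * c k

/-- The Friedrichs-type mollifier `J_ε`, the Fourier multiplier `ĵ(εk)`. -/
def Jmol (jhat : ℝ → ℝ) (ε : ℝ) : FC → FC := mult fun k => jhat (ε * (k : ℝ))

/-- The generalized Lie derivative `𝓛_ξ f = ξ ∂ₓ f + (∂ₓ ξ) f`. -/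
def lie (ξ c : FC) : FC := mul ξ (D1 c) + mul (D1 ξ) c

/-- `𝓛²_ξ f = 𝓛_ξ (𝓛_ξ f)`. -/
def lie2 (ξ c : FC) : FC := lie ξ (lie ξ c)

/-- The coefficientwise sum `Σ_{k∈ℕ} F k` of a sequence of functions. -/
def tsumFC (F : ℕ → FC) : FC := fun m => ∑' k : ℕ, F k m

/-- The norm on the product space `H^{s₁}×H^{s₂}`. -/
def pairNorm (s₁ s₂ : ℝ) (c d : FC) : ℝ := Real.sqrt (hsNorm s₁ c ^ 2 + hsNorm s₂ d ^ 2)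

/-- The inner product on the product space `H^{s₁}×H^{s₂}`:
`((c₁,d₁),(c₂,d₂)) ↦ (c₁,c₂)_{H^{s₁}} + (d₁,d₂)_{H^{s₂}}`. -/
def pairInner (s₁ s₂ : ℝ) (c₁ d₁ c₂ d₂ : FC) : ℝ := hsInner s₁ c₁ c₂ + hsInner s₂ d₁ d₂

end FC

/-- First component of the singular drift of the stochastic two-component CH system:
`−u ∂ₓ u + ½ (1−∂ₓ²)⁻¹ Σ_k 𝓛²_{ξ_k} (1−∂ₓ²) u`. -/
def gCH1 (ξ : ℕ → FC) (u : FC) : FC :=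
  -(FC.mul u (FC.D1 u)) +
    (1 / 2 : ℝ) • FC.helmInv (FC.tsumFC fun k => FC.lie2 (ξ k) (FC.helm u))

/-- Second component of the singular drift of the stochastic two-component CH system:
`−u ∂ₓ η + ½ Σ_k 𝓛²_{ξ_k} η`. -/
def gCH2 (ξ : ℕ → FC) (u η : FC) : FC :=
  -(FC.mul u (FC.D1 η)) + (1 / 2 : ℝ) • FC.tsumFC fun k => FC.lie2 (ξ k) η

/-- First component of the diffusion coefficient `h^k`:
`−(1−∂ₓ²)⁻¹ 𝓛_{ξ_k} (1−∂ₓ²) u`. -/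
def hCH1 (ξ : ℕ → FC) (k : ℕ) (u : FC) : FC :=
  -(FC.helmInv (FC.lie (ξ k) (FC.helm u)))

/-- Second component of the diffusion coefficient `h^k`: `−𝓛_{ξ_k} η`. -/
def hCH2 (ξ : ℕ → FC) (k : ℕ) (η : FC) : FC := -(FC.lie (ξ k) η)

namespace S18

/-- Real-variable weight. -/
def W (q x : ℝ) : ℝ := (1 + x ^ 2) ^ q

lemma W_pos (q x : ℝ) : 0 < W q x := Real.rpow_pos_of_pos (by positivity) _

lemma W_add (q r x : ℝ) : W (q + r) x = W q x * W r x :=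
  Real.rpow_add (by positivity) _ _

lemma W_one (x : ℝ) : W 1 x = 1 + x ^ 2 := Real.rpow_one _

lemma W_neg_arg (q x : ℝ) : W q (-x) = W q x := by simp [W]

lemma wt_eq (q : ℝ) (k : ℤ) : FC.wt q k = W q k := rfl

lemma W_half_sq (q x : ℝ) : W (q / 2) x ^ 2 = W q x := by
  rw [sq, ← W_add]; congr 1; ring

lemma peetre {q : ℝ} (hq : 0 ≤ q) (x y z : ℝ) (h : |x - y| ≤ |z|) :
    W q x ≤ 2 ^ q * (W q y * W q z) := by
  unfold W
  rw [← Real.mul_rpow (by positivity) (by positivity),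
    ← Real.mul_rpow (by positivity) (by positivity)]
  apply Real.rpow_le_rpow (by positivity) _ hq
  have h2 : (x - y) ^ 2 ≤ z ^ 2 := sq_le_sq.mpr h
  nlinarith [sq_nonneg (x - 2 * y), sq_nonneg (y * z), sq_nonneg y, sq_nonneg z]

/-- symbol of the mollifier -/
def tau (ε x : ℝ) : ℝ := (1 + ε ^ 2 * x ^ 2)⁻¹

lemma tau_pos (ε x : ℝ) : 0 < tau ε x := by unfold tau; positivity

lemma tau_le_one (ε x : ℝ) : tau ε x ≤ 1 := by
  unfold tau
  apply inv_le_one_of_one_le₀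
  nlinarith [mul_nonneg (sq_nonneg ε) (sq_nonneg x)]

lemma tau_peetre {ε : ℝ} (h0 : 0 < ε) (h1 : ε < 1) (x y z : ℝ) (h : |y - x| ≤ |z|) :
    tau ε x ≤ 2 * (tau ε y * W 1 z) := by
  rw [W_one]
  unfold tau
  have h2 : (y - x) ^ 2 ≤ z ^ 2 := sq_le_sq.mpr h
  have hx : 0 < 1 + ε ^ 2 * x ^ 2 := by positivity
  have hy : 0 < 1 + ε ^ 2 * y ^ 2 := by positivity
  rw [inv_mul_eq_div, ← mul_div_assoc, inv_eq_one_div, div_le_div_iff₀ hx hy]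
  have e1 : ε ^ 2 ≤ 1 := by nlinarith
  have h3 : y ^ 2 ≤ 2 * x ^ 2 + 2 * z ^ 2 := by nlinarith [sq_nonneg (y - 2 * x)]
  have h4 : ε ^ 2 * y ^ 2 ≤ ε ^ 2 * (2 * x ^ 2 + 2 * z ^ 2) :=
    mul_le_mul_of_nonneg_left h3 (sq_nonneg _)
  have h5 : ε ^ 2 * z ^ 2 ≤ z ^ 2 := by nlinarith [sq_nonneg z]
  have h6 : 0 ≤ z ^ 2 * (ε ^ 2 * x ^ 2) := by positivity
  nlinarith

lemma tau_mul_abs {ε : ℝ} (h0 : 0 < ε) (x : ℝ) : tau ε x * |x| ≤ ε⁻¹ := by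
  unfold tau
  rw [inv_mul_eq_div, inv_eq_one_div, div_le_div_iff₀ (by positivity) h0]
  have : x ^ 2 = |x| ^ 2 := (sq_abs x).symm
  rw [this]
  nlinarith [sq_nonneg (ε * |x| - 1), sq_nonneg (ε * |x|), abs_nonneg x]

def phi (q ε x : ℝ) : ℝ := x * (W q x * tau ε x ^ 2)

lemma phi_deriv (q ε x : ℝ) : HasDerivAt (phi q ε)
    (W q x * tau ε x ^ 2 * (1 + 2 * q * (x ^ 2 / (1 + x ^ 2)) - 4 * (ε ^ 2 * x ^ 2 * tau ε x))) x := by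
  have hp : (1 + x ^ 2 : ℝ) ≠ 0 := by positivity
  have ht : (1 + ε ^ 2 * x ^ 2 : ℝ) ≠ 0 := by positivity
  have h1 : HasDerivAt (fun x : ℝ => 1 + x ^ 2) (2 * x) x := by
    simpa using (hasDerivAt_pow 2 x).const_add 1
  have h2 : HasDerivAt (W q) (2 * x * q * (1 + x ^ 2) ^ (q - 1)) x :=
    h1.rpow_const (Or.inl hp)
  have h3 : HasDerivAt (fun x : ℝ => 1 + ε ^ 2 * x ^ 2) (ε ^ 2 * (2 * x)) x := by
    simpa using ((hasDerivAt_pow 2 x).const_mul (ε ^ 2)).const_add 1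
  have h4 : HasDerivAt (tau ε) (-(ε ^ 2 * (2 * x)) / (1 + ε ^ 2 * x ^ 2) ^ 2) x := h3.inv ht
  have h5 := (hasDerivAt_id x).mul (h2.mul (h4.pow 2))
  refine h5.congr_deriv ?_
  rw [Real.rpow_sub_one hp]
  simp only [id, Pi.mul_apply, Pi.pow_apply, W, tau, show 2 - 1 = 1 from rfl, pow_one]
  push_cast
  field_simp
  ring

lemma phi_deriv_bound {q ε : ℝ} (hq : 0 ≤ q) (x : ℝ) :
    |W q x * tau ε x ^ 2 * (1 + 2 * q * (x ^ 2 / (1 + x ^ 2)) - 4 * (ε ^ 2 * x ^ 2 * tau ε x))|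
      ≤ (5 + 2 * q) * (W q x * tau ε x ^ 2) := by
  have hW := W_pos q x
  have ht := tau_pos ε x
  rw [abs_mul, abs_of_pos (by positivity), mul_comm]
  apply mul_le_mul_of_nonneg_right _ (by positivity)
  have a1 : x ^ 2 / (1 + x ^ 2) ≤ 1 := by
    rw [div_le_one (by positivity)]; linarith
  have a0 : 0 ≤ x ^ 2 / (1 + x ^ 2) := by positivity
  have b0 : 0 ≤ ε ^ 2 * x ^ 2 * tau ε x := by positivity
  have b1 : ε ^ 2 * x ^ 2 * tau ε x ≤ 1 := by
    unfold tau
    rw [← div_eq_mul_inv, div_le_one (by positivity)]; linarith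
  rw [abs_le]
  constructor <;> nlinarith [mul_le_mul_of_nonneg_left a1 hq, mul_nonneg hq a0]

lemma phi_diff {q ε : ℝ} (hq : 0 ≤ q) (h0 : 0 < ε) (h1 : ε < 1) (k l : ℝ) :
    |phi q ε k - phi q ε l| ≤ (5 + 2 * q) * (2 ^ (q / 2)) ^ 2 * 2 *
      (W (q + 2) (k - l) * W (q / 2) l * (tau ε k * W (q / 2) k)) := by
  set j := k - l with hj
  have hq2 : 0 ≤ q / 2 := by positivity
  have key : ∀ x ∈ Set.uIcc l k, ‖W q x * tau ε x ^ 2 *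
      (1 + 2 * q * (x ^ 2 / (1 + x ^ 2)) - 4 * (ε ^ 2 * x ^ 2 * tau ε x))‖ ≤
      (5 + 2 * q) * ((2 ^ (q / 2)) ^ 2 * (W (q / 2) l * W (q / 2) k * W q j)
        * (2 * (tau ε k * W 1 j))) := by
    intro x hx
    rw [Real.norm_eq_abs]
    refine (phi_deriv_bound hq x).trans ?_
    apply mul_le_mul_of_nonneg_left _ (by positivity)
    have hxl : |x - l| ≤ |j| := Set.abs_sub_left_of_mem_uIcc hx
    have hxk : |k - x| ≤ |j| := Set.abs_sub_right_of_mem_uIcc hx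
    have hxk' : |x - k| ≤ |j| := by rwa [abs_sub_comm]
    have p1 := peetre hq2 x l j hxl
    have p2 := peetre hq2 x k j hxk'
    have p3 := tau_peetre h0 h1 x k j hxk
    have p4 := tau_le_one ε x
    have hWl := W_pos (q / 2) l
    have hWk := W_pos (q / 2) k
    have hWj := W_pos (q / 2) j
    have hWx := W_pos (q / 2) x
    have ht := tau_pos ε x
    have htk := tau_pos ε k
    have h1j := W_pos 1 j
    have e1 : W q x ≤ (2 ^ (q / 2)) ^ 2 * (W (q / 2) l * W (q / 2) k * W q j) := by
      rw [← W_half_sq q x, ← W_half_sq q j, sq]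
      calc W (q / 2) x * W (q / 2) x ≤ _ := mul_le_mul p1 p2 hWx.le (by positivity)
        _ = _ := by ring
    have e2 : tau ε x ^ 2 ≤ 2 * (tau ε k * W 1 j) := by nlinarith
    exact mul_le_mul e1 e2 (by positivity) (by have := W_pos q j; positivity)
  have mv := (convex_uIcc l k).norm_image_sub_le_of_norm_hasDerivWithin_le
    (fun x _ => (phi_deriv q ε x).hasDerivWithinAt) key Set.left_mem_uIcc Set.right_mem_uIcc
  rw [Real.norm_eq_abs, Real.norm_eq_abs, ← hj] at mv
  refine mv.trans ?_
  have hjW : |j| ≤ W 1 j := by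
    rw [W_one, ← sq_abs]; nlinarith [sq_nonneg (|j| - 1), abs_nonneg j]
  have hWl := W_pos (q / 2) l
  have hWk := W_pos (q / 2) k
  have hWj := W_pos q j
  have htk := tau_pos ε k
  have h1j := W_pos 1 j
  have hsplit : W (q + 2) j = W q j * (W 1 j * W 1 j) := by
    rw [← W_add, ← W_add]; norm_num
  rw [hsplit]
  refine (mul_le_mul_of_nonneg_left hjW (by positivity)).trans (le_of_eq ?_)
  ring

lemma cs {ι : Type*} (f g : ι → ℝ) (hf : ∀ i, 0 ≤ f i) (hg : ∀ i, 0 ≤ g i)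
    (sf : Summable fun i => f i ^ 2) (sg : Summable fun i => g i ^ 2) :
    (Summable fun i => f i * g i) ∧
      ∑' i, f i * g i ≤ Real.sqrt (∑' i, f i ^ 2) * Real.sqrt (∑' i, g i ^ 2) := by
  have := Real.summable_and_inner_le_Lp_mul_Lq_tsum_of_nonneg (p := 2) (q := 2)
    Real.HolderConjugate.two_two hf hg (by simpa using sf) (by simpa using sg)
  simpa [Real.sqrt_eq_rpow] using this

/-- Young-type inequality. -/
lemma young (E f g : ℤ → ℝ) (hE : ∀ i, 0 ≤ E i) (hf : ∀ i, 0 ≤ f i) (hg : ∀ i, 0 ≤ g i)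
    (sE : Summable E) (sf : Summable fun i => f i ^ 2) (sg : Summable fun i => g i ^ 2) :
    (Summable fun p : ℤ × ℤ => E p.2 * f (p.1 - p.2) * g p.1) ∧
      ∑' p : ℤ × ℤ, E p.2 * f (p.1 - p.2) * g p.1 ≤
        (∑' i, E i) * (Real.sqrt (∑' i, f i ^ 2) * Real.sqrt (∑' i, g i ^ 2)) := by
  obtain ⟨A, hA⟩ : ∃ A, A = Real.sqrt (∑' i, f i ^ 2) * Real.sqrt (∑' i, g i ^ 2) := ⟨_, rfl⟩
  rw [← hA]
  have hin : ∀ j : ℤ, (Summable fun k => f (k - j) * g k) ∧ ∑' k, f (k - j) * g k ≤ A := by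
    intro j
    have sf' : Summable fun i => f (i - j) ^ 2 :=
      (Equiv.subRight j).summable_iff (f := fun i => f i ^ 2) |>.mpr sf
    have e : ∑' i, f (i - j) ^ 2 = ∑' i, f i ^ 2 :=
      (Equiv.subRight j).tsum_eq (fun i => f i ^ 2)
    have := cs (fun k => f (k - j)) g (fun i => hf _) hg sf' sg
    rw [e, ← hA] at this
    exact this
  have hs : Summable fun p : ℤ × ℤ => E p.1 * f (p.2 - p.1) * g p.2 := by
    rw [summable_prod_of_nonneg (fun p => mul_nonneg (mul_nonneg (hE _) (hf _)) (hg _))]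
    refine ⟨fun j => ?_, ?_⟩
    · simpa [mul_assoc] using (hin j).1.mul_left (E j)
    · refine Summable.of_nonneg_of_le
        (fun j => tsum_nonneg fun k => mul_nonneg (mul_nonneg (hE _) (hf _)) (hg _)) (fun j => ?_)
        (sE.mul_right A)
      simp only [mul_assoc]
      rw [tsum_mul_left]
      exact mul_le_mul_of_nonneg_left (hin j).2 (hE j)
  refine ⟨(Equiv.prodComm ℤ ℤ).summable_iff
    (f := fun p : ℤ × ℤ => E p.1 * f (p.2 - p.1) * g p.2) |>.mpr hs, ?_⟩
  have e2 : ∑' p : ℤ × ℤ, E p.2 * f (p.1 - p.2) * g p.1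
      = ∑' p : ℤ × ℤ, E p.1 * f (p.2 - p.1) * g p.2 :=
    (Equiv.prodComm ℤ ℤ).tsum_eq (fun p : ℤ × ℤ => E p.1 * f (p.2 - p.1) * g p.2)
  rw [e2, hs.tsum_prod, ← tsum_mul_right]
  refine Summable.tsum_le_tsum (fun j => ?_) hs.prod (sE.mul_right A)
  simp only [mul_assoc]
  rw [tsum_mul_left]
  exact mul_le_mul_of_nonneg_left (hin j).2 (hE j)

lemma summable_W : Summable fun k : ℤ => W (-1) k ^ 2 := by
  refine Summable.of_norm_bounded_eventually
    ((Real.summable_one_div_int_pow (p := 2)).mpr (by norm_num)) ?_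
  have : ∀ᶠ k : ℤ in Filter.cofinite, k ≠ 0 := by
    simpa using (Set.finite_singleton (0 : ℤ)).compl_mem_cofinite
  filter_upwards [this] with k hk
  have hk' : (k : ℝ) ≠ 0 := by exact_mod_cast hk
  have hk2 : 0 < (k : ℝ) ^ 2 := by positivity
  have hW : W (-1) k = (1 + (k : ℝ) ^ 2)⁻¹ := Real.rpow_neg_one _
  rw [hW, Real.norm_eq_abs, abs_of_nonneg (by positivity), inv_pow, inv_eq_one_div]
  apply one_div_le_one_div_of_le hk2
  nlinarith

/-- the constant from Cauchy–Schwarz -/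
def K0 : ℝ := Real.sqrt (∑' k : ℤ, W (-1) k ^ 2)

lemma l1_bound (p : ℝ) (ξ : FC) (h : FC.memHs (2 * (p + 1)) ξ) :
    (Summable fun k : ℤ => W p k * ‖ξ k‖) ∧
      ∑' k : ℤ, W p k * ‖ξ k‖ ≤ FC.hsNorm (2 * (p + 1)) ξ * K0 := by
  have e : ∀ k : ℤ, (W (p + 1) k * ‖ξ k‖) ^ 2 = FC.wt (2 * (p + 1)) k * ‖ξ k‖ ^ 2 := by
    intro k
    rw [wt_eq, mul_pow, sq, ← W_add]; congr 2; ring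
  have e2 : ∀ k : ℤ, (W (p + 1) k * ‖ξ k‖) * W (-1) k = W p k * ‖ξ k‖ := by
    intro k
    rw [mul_right_comm, ← W_add]; congr 2; ring
  have := cs (fun k : ℤ => W (p + 1) k * ‖ξ k‖) (fun k : ℤ => W (-1) k)
    (fun k => mul_nonneg (W_pos _ _).le (norm_nonneg _)) (fun k => (W_pos _ _).le)
    (by simp only [e]; exact h) summable_W
  simp only [e, e2] at this
  exact this

lemma bdd_of_mem {q : ℝ} (hq : 1 ≤ q) (v : FC) (h : FC.memHs q v) :
    ∃ M : ℝ, ∀ l : ℤ, ‖v l‖ ≤ M ∧ |(l : ℝ)| * ‖v l‖ ≤ M := by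
  refine ⟨Real.sqrt (∑' k : ℤ, FC.wt q k * ‖v k‖ ^ 2), fun l => ?_⟩
  have h1 : FC.wt q l * ‖v l‖ ^ 2 ≤ ∑' k : ℤ, FC.wt q k * ‖v k‖ ^ 2 :=
    h.le_tsum l (fun j _ => mul_nonneg (W_pos _ _).le (sq_nonneg _))
  have h2 : 1 + (l : ℝ) ^ 2 ≤ FC.wt q l := by
    rw [wt_eq, ← W_one]
    exact Real.rpow_le_rpow_of_exponent_le (by nlinarith [sq_nonneg (l : ℝ)]) hq
  have h3 := mul_le_mul_of_nonneg_right h2 (sq_nonneg ‖v l‖)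
  constructor
  · apply Real.le_sqrt_of_sq_le
    nlinarith [mul_nonneg (sq_nonneg (l : ℝ)) (sq_nonneg ‖v l‖)]
  · apply Real.le_sqrt_of_sq_le
    rw [mul_pow, sq_abs]
    nlinarith [sq_nonneg ‖v l‖]

lemma lie_apply {p q : ℝ} (hp : 1 ≤ p) (hq : 1 ≤ q) (ξ v : FC) (hv : FC.memHs q v)
    (hξ : Summable fun k : ℤ => W p k * ‖ξ k‖) (k : ℤ) :
    FC.lie ξ v k = ∑' j : ℤ, Complex.I * (k : ℂ) * (ξ j * v (k - j)) := by
  obtain ⟨M, hM⟩ := bdd_of_mem hq v hv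
  have hW : ∀ j : ℤ, 1 + (j : ℝ) ^ 2 ≤ W p j := by
    intro j
    rw [← W_one]
    exact Real.rpow_le_rpow_of_exponent_le (by nlinarith [sq_nonneg (j : ℝ)]) hp
  have hM0 : 0 ≤ M := (norm_nonneg _).trans (hM 0).1
  have s1 : Summable fun j : ℤ => ξ j * FC.D1 v (k - j) := by
    refine Summable.of_norm_bounded (hξ.mul_right M) (fun j => ?_)
    have e : ‖ξ j * FC.D1 v (k - j)‖ = ‖ξ j‖ * (|((k - j : ℤ) : ℝ)| * ‖v (k - j)‖) := by
      simp only [FC.D1, norm_mul, Complex.norm_I, one_mul, Complex.norm_intCast]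
    rw [e]
    have := (hM (k - j)).2
    apply mul_le_mul _ this (by positivity) (mul_nonneg (W_pos _ _).le (norm_nonneg _))
    nlinarith [hW j, norm_nonneg (ξ j), mul_nonneg (sq_nonneg (j : ℝ)) (norm_nonneg (ξ j)),
      mul_le_mul_of_nonneg_right (hW j) (norm_nonneg (ξ j))]
  have s2 : Summable fun j : ℤ => FC.D1 ξ j * v (k - j) := by
    refine Summable.of_norm_bounded (hξ.mul_right M) (fun j => ?_)
    have e : ‖FC.D1 ξ j * v (k - j)‖ = |(j : ℝ)| * ‖ξ j‖ * ‖v (k - j)‖ := by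
      simp only [FC.D1, norm_mul, Complex.norm_I, one_mul, Complex.norm_intCast]
    rw [e]
    apply mul_le_mul _ (hM (k - j)).1 (norm_nonneg _)
      (mul_nonneg (W_pos _ _).le (norm_nonneg _))
    apply mul_le_mul_of_nonneg_right _ (norm_nonneg _)
    have := hW j
    rw [← sq_abs] at this
    nlinarith [sq_nonneg (|(j : ℝ)| - 1), abs_nonneg (j : ℝ)]
  have : FC.lie ξ v k = ∑' j : ℤ, ξ j * FC.D1 v (k - j) + ∑' j : ℤ, FC.D1 ξ j * v (k - j) := rfl
  rw [this, ← s1.tsum_add s2]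
  apply tsum_congr
  intro j
  simp only [FC.D1]
  push_cast
  ring

/-- the involution `(k,j) ↦ (k-j,-j)` -/
def inv0 : ℤ × ℤ ≃ ℤ × ℤ where
  toFun p := (p.1 - p.2, -p.2)
  invFun p := (p.1 - p.2, -p.2)
  left_inv p := by ext <;> simp
  right_inv p := by ext <;> simp

/-- the double-sum term -/
def P (q ε : ℝ) (ξ v : FC) (p : ℤ × ℤ) : ℂ :=
  Complex.I * (phi q ε p.1 : ℂ) * (ξ p.2 * v (p.1 - p.2) * (starRingEnd ℂ) (v p.1))

lemma P_antisymm (q ε : ℝ) (ξ v : FC) (hξ : FC.isReal ξ) (p : ℤ × ℤ) :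
    P q ε ξ v p + (starRingEnd ℂ) (P q ε ξ v (inv0 p)) =
      Complex.I * ((phi q ε p.1 - phi q ε ((p.1 : ℝ) - p.2) : ℝ) : ℂ) *
        (ξ p.2 * v (p.1 - p.2) * (starRingEnd ℂ) (v p.1)) := by
  obtain ⟨k, j⟩ := p
  simp only [P, inv0, Equiv.coe_fn_mk, hξ j, map_mul, Complex.conj_I, Complex.conj_ofReal,
    Complex.conj_conj, sub_neg_eq_add, sub_add_cancel]
  push_cast
  ring

lemma main_bound {q : ℝ} (hq : 1 ≤ q) : ∃ C : ℝ, 0 ≤ C ∧ ∀ ξ v : FC, ∀ ε : ℝ, 0 < ε → ε < 1 →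
    FC.memHs (2 * (q + 2 + 1)) ξ → FC.isReal ξ → FC.memHs q v →
    |FC.hsInner q (FC.T ε (FC.lie ξ v)) (FC.T ε v)| ≤
      C * FC.hsNorm (2 * (q + 2 + 1)) ξ * (FC.hsNorm q v * FC.hsNorm q (FC.T ε v)) := by
  set C1 : ℝ := (5 + 2 * q) * (2 ^ (q / 2)) ^ 2 * 2 with hC1
  have hC1p : 0 ≤ C1 := by positivity
  have hK0 : 0 ≤ K0 := Real.sqrt_nonneg _
  refine ⟨C1 * K0, by positivity, ?_⟩
  intro ξ v ε h0 h1 hξ hξr hv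
  obtain ⟨sE, hE⟩ := l1_bound (q + 2) ξ hξ
  obtain ⟨E, hEd⟩ : ∃ E : ℤ → ℝ, E = fun k : ℤ => W (q + 2) k * ‖ξ k‖ := ⟨_, rfl⟩
  obtain ⟨f, hfd⟩ : ∃ f : ℤ → ℝ, f = fun k : ℤ => W (q / 2) k * ‖v k‖ := ⟨_, rfl⟩
  obtain ⟨g, hgd⟩ : ∃ g : ℤ → ℝ, g = fun k : ℤ => tau ε k * (W (q / 2) k * ‖v k‖) := ⟨_, rfl⟩
  have E0 : ∀ i, 0 ≤ E i := fun i => by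
    rw [hEd]; exact mul_nonneg (W_pos _ _).le (norm_nonneg _)
  have f0 : ∀ i, 0 ≤ f i := fun i => by
    rw [hfd]; exact mul_nonneg (W_pos _ _).le (norm_nonneg _)
  have g0 : ∀ i, 0 ≤ g i := fun i => by
    rw [hgd]; exact mul_nonneg (tau_pos _ _).le (mul_nonneg (W_pos _ _).le (norm_nonneg _))
  have f2 : (fun i => f i ^ 2) = fun k : ℤ => FC.wt q k * ‖v k‖ ^ 2 := by
    funext k; rw [hfd]; simp only [mul_pow, W_half_sq, wt_eq]
  have nT : ∀ k : ℤ, ‖FC.T ε v k‖ = tau ε k * ‖v k‖ := by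
    intro k
    have : FC.T ε v k = ((tau ε k : ℝ) : ℂ) * v k := rfl
    rw [this, norm_mul, Complex.norm_real, Real.norm_eq_abs, abs_of_pos (tau_pos _ _)]
  have g2 : (fun i => g i ^ 2) = fun k : ℤ => FC.wt q k * ‖FC.T ε v k‖ ^ 2 := by
    funext k; rw [hgd, nT]; simp only [mul_pow, W_half_sq, wt_eq]; ring
  have sf : Summable fun i => f i ^ 2 := by rw [f2]; exact hv
  have sg : Summable fun i => g i ^ 2 := by
    refine Summable.of_nonneg_of_le (fun i => sq_nonneg _) (fun i => ?_) sf
    apply pow_le_pow_left₀ (g0 i)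
    rw [hgd, hfd]
    exact mul_le_of_le_one_left (mul_nonneg (W_pos _ _).le (norm_nonneg _)) (tau_le_one _ _)
  rw [← hEd] at sE hE
  obtain ⟨sG, hG⟩ := young E f g E0 f0 g0 sE sf sg
  -- bound on the symmetrised sum
  have bQ : ∀ p : ℤ × ℤ, ‖P q ε ξ v p + (starRingEnd ℂ) (P q ε ξ v (inv0 p))‖ ≤
      C1 * (E p.2 * f (p.1 - p.2) * g p.1) := by
    rintro ⟨k, j⟩
    rw [P_antisymm q ε ξ v hξr]
    simp only [norm_mul, Complex.norm_I, one_mul, Complex.norm_real, Real.norm_eq_abs,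
      RCLike.norm_conj]
    have hd := phi_diff (q := q) (by linarith) h0 h1 (k : ℝ) ((k : ℝ) - j)
    rw [← hC1, sub_sub_cancel] at hd
    refine (mul_le_mul_of_nonneg_right hd (by positivity)).trans (le_of_eq ?_)
    rw [hEd, hfd, hgd]
    push_cast
    ring
  -- summability of `P`
  have sP : Summable (P q ε ξ v) := by
    refine Summable.of_norm_bounded (sG.mul_left (ε⁻¹ * 2 ^ (q / 2))) ?_
    rintro ⟨k, j⟩
    simp only [P, norm_mul, Complex.norm_I, one_mul, Complex.norm_real, Real.norm_eq_abs,
      RCLike.norm_conj]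
    have t := tau_mul_abs h0 (k : ℝ)
    have pt := peetre (q := q / 2) (by linarith) (k : ℝ) ((k : ℝ) - j) j (by simp)
    have hWj : W (q / 2) (j : ℝ) ≤ W (q + 2) j :=
      Real.rpow_le_rpow_of_exponent_le (by nlinarith [sq_nonneg (j : ℝ)]) (by linarith)
    have hk := tau_pos ε k
    have hWk := W_pos (q / 2) k
    have hWl := W_pos (q / 2) ((k : ℝ) - j)
    have hphi : |phi q ε k| = (tau ε k * |(k : ℝ)|) * W (q / 2) k * (tau ε k * W (q / 2) k) := by
      unfold phi
      rw [← W_half_sq q k, abs_mul, abs_of_pos (a := W (q / 2) k ^ 2 * tau ε k ^ 2)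
        (by positivity)]
      ring
    have b1 : |phi q ε k| ≤ ε⁻¹ * (2 ^ (q / 2) * (W (q / 2) ((k : ℝ) - j) * W (q + 2) j)) *
        (tau ε k * W (q / 2) k) := by
      rw [hphi]
      apply mul_le_mul_of_nonneg_right _ (by positivity)
      apply mul_le_mul t (pt.trans _) hWk.le (by positivity)
      apply mul_le_mul_of_nonneg_left _ (by positivity)
      exact mul_le_mul_of_nonneg_left hWj hWl.le
    refine (mul_le_mul_of_nonneg_right b1 (by positivity)).trans (le_of_eq ?_)
    rw [hEd, hfd, hgd]
    push_cast
    ring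
  -- rewrite the inner product
  have hin : FC.hsInner q (FC.T ε (FC.lie ξ v)) (FC.T ε v) = (∑' p, P q ε ξ v p).re := by
    rw [sP.tsum_prod]
    unfold FC.hsInner
    congr 1
    apply tsum_congr
    intro k
    have e1 : FC.T ε (FC.lie ξ v) k = ((tau ε k : ℝ) : ℂ) * FC.lie ξ v k := rfl
    have e2 : FC.T ε v k = ((tau ε k : ℝ) : ℂ) * v k := rfl
    rw [e1, e2, lie_apply (p := q + 2) (by linarith) hq ξ v hv (by rw [← hEd]; exact sE) k,
      ← tsum_mul_left, ← tsum_mul_right, ← tsum_mul_left]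
    apply tsum_congr
    intro j
    simp only [P, phi, wt_eq, map_mul, Complex.conj_ofReal]
    push_cast
    ring
  have sPi : Summable fun p => (starRingEnd ℂ) (P q ε ξ v (inv0 p)) := by
    have h := (inv0.summable_iff (f := P q ε ξ v)).mpr sP
    exact Complex.summable_conj.mpr h
  have hre : (∑' p, P q ε ξ v p).re * 2 =
      (∑' p, (P q ε ξ v p + (starRingEnd ℂ) (P q ε ξ v (inv0 p)))).re := by
    rw [sP.tsum_add sPi, Complex.add_re, ← Complex.conj_tsum, Complex.conj_re,
      inv0.tsum_eq (P q ε ξ v)]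
    ring
  have hfin : ‖∑' p, (P q ε ξ v p + (starRingEnd ℂ) (P q ε ξ v (inv0 p)))‖ ≤
      C1 * ∑' p : ℤ × ℤ, E p.2 * f (p.1 - p.2) * g p.1 := by
    rw [← tsum_mul_left]
    exact tsum_of_norm_bounded (sG.mul_left C1).hasSum bQ
  have hab := (Complex.abs_re_le_norm _).trans hfin
  rw [← hre, ← hin, abs_mul, abs_two] at hab
  have hnf : Real.sqrt (∑' i, f i ^ 2) = FC.hsNorm q v := by rw [f2]; rfl
  have hng : Real.sqrt (∑' i, g i ^ 2) = FC.hsNorm q (FC.T ε v) := by rw [g2]; rfl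
  rw [hnf, hng] at hG
  have n1 : 0 ≤ FC.hsNorm q v := Real.sqrt_nonneg _
  have n2 : 0 ≤ FC.hsNorm q (FC.T ε v) := Real.sqrt_nonneg _
  have hA0 := abs_nonneg (FC.hsInner q (FC.T ε (FC.lie ξ v)) (FC.T ε v))
  calc |FC.hsInner q (FC.T ε (FC.lie ξ v)) (FC.T ε v)| ≤
      C1 * ∑' p : ℤ × ℤ, E p.2 * f (p.1 - p.2) * g p.1 := by linarith
    _ ≤ C1 * ((FC.hsNorm (2 * (q + 2 + 1)) ξ * K0) * (FC.hsNorm q v * FC.hsNorm q (FC.T ε v))) :=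
        mul_le_mul_of_nonneg_left
          (hG.trans (mul_le_mul_of_nonneg_right hE (mul_nonneg n1 n2))) hC1p
    _ = _ := by ring

lemma hsInner_neg (s ε : ℝ) (c d : FC) :
    FC.hsInner s (FC.T ε (-c)) d = -FC.hsInner s (FC.T ε c) d := by
  unfold FC.hsInner
  rw [← Complex.neg_re, ← tsum_neg]
  congr 2
  funext k
  simp [FC.T, FC.mult]

lemma wt_split (s : ℝ) (k : ℤ) : FC.wt s k = FC.wt (s - 2) k * (1 + (k : ℝ) ^ 2) ^ 2 := by
  rw [wt_eq, wt_eq, ← W_one, sq, ← W_add, ← W_add]; congr 1; ring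

lemma norm_helm (u : FC) (k : ℤ) : ‖FC.helm u k‖ = (1 + (k : ℝ) ^ 2) * ‖u k‖ := by
  have : FC.helm u k = ((1 + (k : ℝ) ^ 2 : ℝ) : ℂ) * u k := rfl
  rw [this, norm_mul, Complex.norm_real, Real.norm_eq_abs, abs_of_pos (by positivity)]

lemma helm_term (s : ℝ) (u : FC) : (fun k : ℤ => FC.wt (s - 2) k * ‖FC.helm u k‖ ^ 2) =
    fun k : ℤ => FC.wt s k * ‖u k‖ ^ 2 := by
  funext k
  rw [norm_helm, wt_split s k]; ring

lemma hsNorm_helm (s : ℝ) (u : FC) : FC.hsNorm (s - 2) (FC.helm u) = FC.hsNorm s u := by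
  unfold FC.hsNorm
  rw [helm_term]

lemma T_helm (ε : ℝ) (u : FC) : FC.T ε (FC.helm u) = FC.helm (FC.T ε u) := by
  funext k
  simp only [FC.T, FC.helm, FC.mult]
  ring

lemma hsInner_helm (s ε : ℝ) (c u : FC) : FC.hsInner s (FC.T ε (FC.helmInv c)) (FC.T ε u) =
    FC.hsInner (s - 2) (FC.T ε c) (FC.T ε (FC.helm u)) := by
  unfold FC.hsInner
  congr 2
  funext k
  rw [wt_split s k]
  have hp : ((1 : ℂ) + (k : ℂ) ^ 2) ≠ 0 := by
    have : (1 + (k : ℝ) ^ 2 : ℝ) ≠ 0 := by positivity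
    exact_mod_cast this
  simp only [FC.T, FC.helm, FC.helmInv, FC.mult, map_mul, Complex.conj_ofReal]
  push_cast
  generalize ((1 : ℂ) + (ε : ℂ) ^ 2 * (k : ℂ) ^ 2)⁻¹ = t
  field_simp

lemma final_alg {M a b c d x : ℝ} (h : |x| ≤ M * (a * b + c * d)) :
    |x| ^ 2 ≤ M ^ 2 * ((a ^ 2 + c ^ 2) * (b ^ 2 + d ^ 2)) := by
  have h1 := pow_le_pow_left₀ (abs_nonneg x) h 2
  refine h1.trans ?_
  rw [mul_pow]
  apply mul_le_mul_of_nonneg_left _ (sq_nonneg _)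
  nlinarith [sq_nonneg (a * d - b * c)]

end S18

/-- Let `s > 11/2` and `Σ_k ‖ξ_k‖_{H^σ} < ∞` for all `σ ≥ 0`.  With
`h^k(X) = (−(1−∂ₓ²)⁻¹𝓛_{ξ_k}(1−∂ₓ²)u, −𝓛_{ξ_k}η)` and `T̃_ε = (1−ε²∂ₓ²)⁻¹` acting
componentwise, there is `C > 0`, independent of `ε`, such that for all `ε ∈ (0,1)` and
`X = (u,η) ∈ H^s × H^{s-1}`:
`Σ_k |(T̃_ε h^k(X), T̃_ε X)_{H^s×H^{s-1}}|²`
`≤ C (‖u‖²_{H^s} + ‖η‖²_{H^{s-1}}) ‖T̃_ε X‖²_{H^s×H^{s-1}}`. -/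
theorem statement18 (s : ℝ) (hs : 11 / 2 < s) (ξ : ℕ → FC)
    (hξmem : ∀ σ : ℝ, 0 ≤ σ → ∀ k : ℕ, FC.memHs σ (ξ k))
    (hξreal : ∀ k : ℕ, FC.isReal (ξ k))
    (hξsum : ∀ σ : ℝ, 0 ≤ σ → Summable fun k : ℕ => FC.hsNorm σ (ξ k)) :
    ∃ C > (0 : ℝ), ∀ ε : ℝ, ε ∈ Set.Ioo (0 : ℝ) 1 → ∀ u η : FC,
      FC.memHs s u → FC.memHs (s - 1) η → FC.isReal u → FC.isReal η →
      Summable (fun k : ℕ =>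
        |FC.pairInner s (s - 1)
            (FC.T ε (hCH1 ξ k u)) (FC.T ε (hCH2 ξ k η)) (FC.T ε u) (FC.T ε η)| ^ 2) ∧
      ∑' k : ℕ,
          |FC.pairInner s (s - 1)
            (FC.T ε (hCH1 ξ k u)) (FC.T ε (hCH2 ξ k η)) (FC.T ε u) (FC.T ε η)| ^ 2
        ≤ C * (FC.hsNorm s u ^ 2 + FC.hsNorm (s - 1) η ^ 2)
            * FC.pairNorm s (s - 1) (FC.T ε u) (FC.T ε η) ^ 2 := by
  obtain ⟨C1, hC1, H1⟩ := S18.main_bound (q := s - 2) (by linarith)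
  obtain ⟨C2, hC2, H2⟩ := S18.main_bound (q := s - 1) (by linarith)
  obtain ⟨M, hMd⟩ : ∃ M : ℕ → ℝ, M = fun k =>
      C1 * FC.hsNorm (2 * (s - 2 + 2 + 1)) (ξ k) + C2 * FC.hsNorm (2 * (s - 1 + 2 + 1)) (ξ k) :=
    ⟨_, rfl⟩
  have hn : ∀ (r : ℝ) (c : FC), 0 ≤ FC.hsNorm r c := fun r c => Real.sqrt_nonneg _
  have hM0 : ∀ k, 0 ≤ M k := fun k => by
    rw [hMd]; exact add_nonneg (mul_nonneg hC1 (hn _ _)) (mul_nonneg hC2 (hn _ _))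
  have sM : Summable M := by
    rw [hMd]
    exact ((hξsum _ (by linarith)).mul_left C1).add ((hξsum _ (by linarith)).mul_left C2)
  have sM2 : Summable fun k => M k ^ 2 := by
    refine Summable.of_nonneg_of_le (fun k => sq_nonneg _) (fun k => ?_) (sM.mul_left (∑' k, M k))
    rw [sq]
    exact mul_le_mul_of_nonneg_right (sM.le_tsum k fun j _ => hM0 j) (hM0 k)
  refine ⟨∑' k, M k ^ 2 + 1, by
    have : 0 ≤ ∑' k, M k ^ 2 := tsum_nonneg fun k => sq_nonneg _
    linarith, ?_⟩
  intro ε hε u η hu hη _ _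
  have hb : ∀ k : ℕ, |FC.pairInner s (s - 1)
      (FC.T ε (hCH1 ξ k u)) (FC.T ε (hCH2 ξ k η)) (FC.T ε u) (FC.T ε η)| ^ 2 ≤
      M k ^ 2 * ((FC.hsNorm s u ^ 2 + FC.hsNorm (s - 1) η ^ 2) *
        (FC.hsNorm s (FC.T ε u) ^ 2 + FC.hsNorm (s - 1) (FC.T ε η) ^ 2)) := by
    intro k
    apply S18.final_alg
    have b1 := H1 (ξ k) (FC.helm u) ε hε.1 hε.2 (hξmem _ (by linarith) k) (hξreal k)
      (by unfold FC.memHs; rw [S18.helm_term]; exact hu)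
    have b2 := H2 (ξ k) η ε hε.1 hε.2 (hξmem _ (by linarith) k) (hξreal k) hη
    rw [← S18.hsInner_helm, S18.T_helm, S18.hsNorm_helm, S18.hsNorm_helm] at b1
    have e : FC.pairInner s (s - 1)
        (FC.T ε (hCH1 ξ k u)) (FC.T ε (hCH2 ξ k η)) (FC.T ε u) (FC.T ε η) =
        -FC.hsInner s (FC.T ε (FC.helmInv (FC.lie (ξ k) (FC.helm u)))) (FC.T ε u) +
        -FC.hsInner (s - 1) (FC.T ε (FC.lie (ξ k) η)) (FC.T ε η) := by
      unfold FC.pairInner hCH1 hCH2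
      rw [S18.hsInner_neg, S18.hsInner_neg]
    rw [e]
    refine (abs_add_le _ _).trans ?_
    rw [abs_neg, abs_neg, mul_add]
    have m1 : C1 * FC.hsNorm (2 * (s - 2 + 2 + 1)) (ξ k) ≤ M k := by
      rw [hMd]; exact le_add_of_nonneg_right (mul_nonneg hC2 (hn _ _))
    have m2 : C2 * FC.hsNorm (2 * (s - 1 + 2 + 1)) (ξ k) ≤ M k := by
      rw [hMd]; exact le_add_of_nonneg_left (mul_nonneg hC1 (hn _ _))
    exact add_le_add
      (b1.trans (mul_le_mul_of_nonneg_right m1 (mul_nonneg (hn _ _) (hn _ _))))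
      (b2.trans (mul_le_mul_of_nonneg_right m2 (mul_nonneg (hn _ _) (hn _ _))))
  have hS := sM2.mul_right ((FC.hsNorm s u ^ 2 + FC.hsNorm (s - 1) η ^ 2) *
        (FC.hsNorm s (FC.T ε u) ^ 2 + FC.hsNorm (s - 1) (FC.T ε η) ^ 2))
  have hS2 := Summable.of_nonneg_of_le (fun k => sq_nonneg _) hb hS
  refine ⟨hS2, ?_⟩
  refine (Summable.tsum_le_tsum hb hS2 hS).trans ?_
  rw [tsum_mul_right]
  have hp : FC.pairNorm s (s - 1) (FC.T ε u) (FC.T ε η) ^ 2 =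
      FC.hsNorm s (FC.T ε u) ^ 2 + FC.hsNorm (s - 1) (FC.T ε η) ^ 2 :=
    Real.sq_sqrt (by positivity)
  rw [hp, mul_assoc]
  apply mul_le_mul_of_nonneg_right (by linarith) (by positivity)
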